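/- (Completeness of the dual invariants.) Let (v₀¹, v₁¹) and (v₀², v₁²) be two arc-length parametrized non-cylindrical ruled surfaces on the same interval I, with invariants κ₁¹, τ₀¹, τ₁¹ and κ₁², τ₀², τ₁² respectively. If κ₁¹(s) = κ₁²(s), τ₀¹(s) = τ₀²(s) and τ₁¹(s) = τ₁²(s) for all s ∈ I, then there exist a rotation A ∈ SO(3) (a linear isometry of ℝ³ with determinant 1) and a vector b ∈ ℝ³ such that for all s ∈ I: v₀²(s) = A(v₀¹(s)) and v₁²(s) = A(v₁¹(s)) + b × A(v₀¹(s)). In particular, the Euclidean motion x ↦ A x + b carries every ruling of the first ruled surface onto the corresponding ruling of the second. -/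

import Mathlib

noncomputable section
open scoped RealInnerProductSpace

/-- Euclidean 3-space `ℝ³`. -/
abbrev E3 : Type := EuclideanSpace ℝ (Fin 3)

/-- The cross product on `E3`. -/
def cross (u v : E3) : E3 :=
  (WithLp.equiv 2 (Fin 3 → ℝ)).symm
    ![u 1 * v 2 - u 2 * v 1, u 2 * v 0 - u 0 * v 2, u 0 * v 1 - u 1 * v 0]

/-- Determinant of the 3×3 matrix with columns `u`, `v`, `w`. -/
def det3 (u v w : E3) : ℝ :=
  Matrix.det !![u 0, v 0, w 0; u 1, v 1, w 1; u 2, v 2, w 2]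

namespace Ruled

/-- The director curve `e = v₀`. -/
def e (v₀ : ℝ → E3) : ℝ → E3 := v₀

/-- The base curve `r = v₀ × v₁`. -/
def r (v₀ v₁ : ℝ → E3) : ℝ → E3 := fun s => cross (v₀ s) (v₁ s)

/-- The parametrization `F(s,t) = r(s) + t • e(s)` of the ruled surface. -/
def F (v₀ v₁ : ℝ → E3) (s t : ℝ) : E3 := r v₀ v₁ s + t • v₀ s

/-- `n₀ = v₀'`. -/
def n₀ (v₀ : ℝ → E3) : ℝ → E3 := fun s => deriv v₀ s

/-- `κ₁ = ⟪v₀', v₁'⟫`, the ε-part of the dual curvature. -/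
def κ₁ (v₀ v₁ : ℝ → E3) : ℝ → ℝ := fun s => ⟪deriv v₀ s, deriv v₁ s⟫

/-- `n₁ = v₁' - κ₁ • v₀'`. -/
def n₁ (v₀ v₁ : ℝ → E3) : ℝ → E3 := fun s => deriv v₁ s - κ₁ v₀ v₁ s • deriv v₀ s

/-- `t₀ = v₀ × n₀`. -/
def t₀ (v₀ : ℝ → E3) : ℝ → E3 := fun s => cross (v₀ s) (n₀ v₀ s)

/-- `t₁ = v₀ × n₁ + v₁ × n₀`. -/
def t₁ (v₀ v₁ : ℝ → E3) : ℝ → E3 :=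
  fun s => cross (v₀ s) (n₁ v₀ v₁ s) + cross (v₁ s) (n₀ v₀ s)

/-- `τ₀ = ⟪n₀', t₀⟫`, the real part of the dual torsion. -/
def τ₀ (v₀ : ℝ → E3) : ℝ → ℝ := fun s => ⟪deriv (n₀ v₀) s, t₀ v₀ s⟫

/-- `τ₁ = ⟪n₀', t₁⟫ + ⟪n₁', t₀⟫`, the ε-part of the dual torsion. -/
def τ₁ (v₀ v₁ : ℝ → E3) : ℝ → ℝ :=
  fun s => ⟪deriv (n₀ v₀) s, t₁ v₀ v₁ s⟫ + ⟪deriv (n₁ v₀ v₁) s, t₀ v₀ s⟫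

/-- The striction curve `σ(s) = r(s) - ⟪r'(s), e'(s)⟫ • e(s)`. -/
def strict (v₀ v₁ : ℝ → E3) : ℝ → E3 :=
  fun s => r v₀ v₁ s - ⟪deriv (r v₀ v₁) s, deriv (e v₀) s⟫ • e v₀ s

end Ruled

open Ruled

lemma cr0 (u v : E3) : cross u v 0 = u 1 * v 2 - u 2 * v 1 := rfl
lemma cr1 (u v : E3) : cross u v 1 = u 2 * v 0 - u 0 * v 2 := rfl
lemma cr2 (u v : E3) : cross u v 2 = u 0 * v 1 - u 1 * v 0 := rfl
lemma inn (u v : E3) : ⟪u, v⟫ = u 0 * v 0 + u 1 * v 1 + u 2 * v 2 := by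
  simp [PiLp.inner_apply, Fin.sum_univ_three]; ring

lemma e3ext {u v : E3} (h0 : u 0 = v 0) (h1 : u 1 = v 1) (h2 : u 2 = v 2) : u = v := by
  ext i; fin_cases i <;> assumption

lemma cross_deriv {u v : ℝ → E3} {u' v' : E3} {s : ℝ} (hu : HasDerivAt u u' s)
    (hv : HasDerivAt v v' s) :
    HasDerivAt (fun x => cross (u x) (v x)) (cross u' (v s) + cross (u s) v') s := by
  have co : ∀ {f : ℝ → E3} {f' : E3}, HasDerivAt f f' s → ∀ i, HasDerivAt (fun x => f x i) (f' i) s :=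
    fun h i => (EuclideanSpace.proj (𝕜 := ℝ) i).hasFDerivAt.comp_hasDerivAt s h
  have hu' := co hu
  have hv' := co hv
  suffices h : ∀ i, HasDerivAt (fun x => cross (u x) (v x) i)
      ((cross u' (v s) + cross (u s) v') i) s from
    ((EuclideanSpace.equiv (Fin 3) ℝ).symm : (Fin 3 → ℝ) →L[ℝ] E3).hasFDerivAt.comp_hasDerivAt s
      (hasDerivAt_pi.2 h)
  intro i
  fin_cases i
  · exact (((hu' 1).mul (hv' 2)).sub ((hu' 2).mul (hv' 1))).congr_deriv
      (by simp [cr0]; ring)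
  · exact (((hu' 2).mul (hv' 0)).sub ((hu' 0).mul (hv' 2))).congr_deriv
      (by simp [cr1]; ring)
  · exact (((hu' 0).mul (hv' 1)).sub ((hu' 1).mul (hv' 0))).congr_deriv
      (by simp [cr2]; ring)

lemma cross_inner_self (T N : E3) : ⟪cross T N, cross T N⟫ = ⟪T,T⟫ * ⟪N,N⟫ - ⟪T,N⟫^2 := by
  simp only [inn, cr0, cr1, cr2]; ring

lemma frame_on {T N : E3} (hT : ⟪T, T⟫ = 1) (hN : ⟪N, N⟫ = 1) (hTN : ⟪T, N⟫ = 0) :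
    Orthonormal ℝ ![T, N, cross T N] := by
  have h1 : ⟪T, cross T N⟫ = 0 := by simp only [inn, cr0, cr1, cr2]; ring
  have h2 : ⟪N, cross T N⟫ = 0 := by simp only [inn, cr0, cr1, cr2]; ring
  have h3 : ⟪cross T N, cross T N⟫ = 1 := by rw [cross_inner_self, hT, hN, hTN]; ring
  rw [orthonormal_iff_ite]
  intro i j
  fin_cases i <;> fin_cases j <;>
    simp [hT, hN, hTN, h1, h2, h3, real_inner_comm T N, real_inner_comm T (cross T N),
      real_inner_comm N (cross T N), real_inner_comm N T, -real_inner_self_eq_norm_sq,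
      -inner_self_eq_norm_sq_to_K] <;>
    first
    | (rw [real_inner_comm]; assumption)
    | skip

def frameB {T N : E3} (hT : ⟪T, T⟫ = 1) (hN : ⟪N, N⟫ = 1) (hTN : ⟪T, N⟫ = 0) :
    OrthonormalBasis (Fin 3) ℝ E3 :=
  (basisOfOrthonormalOfCardEqFinrank (frame_on hT hN hTN) (by simp)).toOrthonormalBasis
    (by simpa using frame_on hT hN hTN)

lemma frameB_coe {T N : E3} (hT : ⟪T, T⟫ = 1) (hN : ⟪N, N⟫ = 1) (hTN : ⟪T, N⟫ = 0) :
    (frameB hT hN hTN : Fin 3 → E3) = ![T, N, cross T N] := by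
  simp [frameB]

lemma frame_expand {T N : E3} (hT : ⟪T, T⟫ = 1) (hN : ⟪N, N⟫ = 1) (hTN : ⟪T, N⟫ = 0) (x : E3) :
    x = ⟪T, x⟫ • T + ⟪N, x⟫ • N + ⟪cross T N, x⟫ • cross T N := by
  have := (frameB hT hN hTN).sum_repr' x
  rw [frameB_coe, Fin.sum_univ_three] at this
  exact this.symm

lemma std_det (u v w : E3) :
    (EuclideanSpace.basisFun (Fin 3) ℝ).toBasis.det ![u, v, w] = ⟪cross u v, w⟫ := by
  rw [Module.Basis.det_apply, Matrix.det_fin_three]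
  simp [Module.Basis.toMatrix_apply, inn, cr0, cr1, cr2]
  ring

lemma map_det (A : E3 →ₗ[ℝ] E3) (u v w : E3) :
    ⟪cross (A u) (A v), A w⟫ = LinearMap.det A * ⟪cross u v, w⟫ := by
  rw [← std_det, ← std_det, ← Module.Basis.det_comp]
  congr 1
  ext i; fin_cases i <;> rfl

lemma map_cross (A : E3 ≃ₗᵢ[ℝ] E3) (hA : LinearMap.det (A.toLinearEquiv : E3 →ₗ[ℝ] E3) = 1)
    (u v : E3) : A (cross u v) = cross (A u) (A v) := by
  have key : ∀ w, ⟪cross (A u) (A v), A w⟫ = ⟪A (cross u v), A w⟫ := by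
    intro w
    have := map_det (A.toLinearEquiv : E3 →ₗ[ℝ] E3) u v w
    rw [hA, one_mul] at this
    rw [A.inner_map_map]; exact this
  apply ext_inner_right ℝ
  intro w
  have := key (A.symm w)
  simpa using this.symm

lemma const_on {I : Set ℝ} (hI : IsOpen I) (hI' : I.OrdConnected) {f : ℝ → E3}
    (h : ∀ s ∈ I, HasDerivAt f 0 s) {a b : ℝ} (ha : a ∈ I) (hb : b ∈ I) : f a = f b := by
  refine hI.is_const_of_deriv_eq_zero hI'.isPreconnected
    (fun s hs => (h s hs).differentiableAt.differentiableWithinAt) (fun s hs => (h s hs).deriv) ha hb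

/-- Structure equations of one surface. -/
lemma structure_eqs {I : Set ℝ} {v₀ v₁ : ℝ → E3} (hI : IsOpen I)
    (hv₀ : ContDiffOn ℝ (⊤ : ℕ∞) v₀ I) (hv₁ : ContDiffOn ℝ (⊤ : ℕ∞) v₁ I)
    (hunit : ∀ s ∈ I, ‖v₀ s‖ = 1) (horth : ∀ s ∈ I, ⟪v₀ s, v₁ s⟫ = 0)
    (harc : ∀ s ∈ I, ‖deriv v₀ s‖ = 1) :
    ∃ N B p : ℝ → E3, ∀ s ∈ I, ⟪v₀ s, v₀ s⟫ = 1 ∧ ⟪N s, N s⟫ = 1 ∧ ⟪v₀ s, N s⟫ = 0 ∧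
      B s = cross (v₀ s) (N s) ∧ HasDerivAt v₀ (N s) s ∧
      HasDerivAt N (- v₀ s + τ₀ v₀ s • B s) s ∧
      HasDerivAt B (- (τ₀ v₀ s • N s)) s ∧
      HasDerivAt p (τ₁ v₀ v₁ s • v₀ s + κ₁ v₀ v₁ s • B s) s ∧
      v₁ s = cross (p s) (v₀ s) := by
  have c1 := ((contDiffOn_infty_iff_deriv_of_isOpen hI).1 hv₀)
  have c2 := ((contDiffOn_infty_iff_deriv_of_isOpen hI).1 c1.2)
  have d1 := ((contDiffOn_infty_iff_deriv_of_isOpen hI).1 hv₁)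
  have d2 := ((contDiffOn_infty_iff_deriv_of_isOpen hI).1 d1.2)
  have hT : ∀ s ∈ I, HasDerivAt v₀ (deriv v₀ s) s := fun s hs =>
    (c1.1.differentiableAt (hI.mem_nhds hs)).hasDerivAt
  have hN : ∀ s ∈ I, HasDerivAt (deriv v₀) (deriv (deriv v₀) s) s := fun s hs =>
    (c2.1.differentiableAt (hI.mem_nhds hs)).hasDerivAt
  have hV : ∀ s ∈ I, HasDerivAt v₁ (deriv v₁ s) s := fun s hs =>
    (d1.1.differentiableAt (hI.mem_nhds hs)).hasDerivAt
  have hV' : ∀ s ∈ I, HasDerivAt (deriv v₁) (deriv (deriv v₁) s) s := fun s hs =>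
    (d2.1.differentiableAt (hI.mem_nhds hs)).hasDerivAt
  have uT : ∀ s ∈ I, ⟪v₀ s, v₀ s⟫ = 1 := fun s hs => by
    rw [real_inner_self_eq_norm_sq, hunit s hs]; norm_num
  have uN : ∀ s ∈ I, ⟪deriv v₀ s, deriv v₀ s⟫ = 1 := fun s hs => by
    rw [real_inner_self_eq_norm_sq, harc s hs]; norm_num
  have cst : ∀ (f : ℝ → ℝ) (c f' s : ℝ), (∀ x ∈ I, f x = c) → s ∈ I → HasDerivAt f f' s →
      f' = 0 := by
    intro f c f' s hf hs h
    have : f =ᶠ[nhds s] fun _ => c := by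
      filter_upwards [hI.mem_nhds hs] with x hx using hf x hx
    exact (h.congr_of_eventuallyEq this.symm).unique (hasDerivAt_const s c)
  have oTN : ∀ s ∈ I, ⟪v₀ s, deriv v₀ s⟫ = 0 := fun s hs => by
    have := cst _ _ _ s uT hs ((hT s hs).inner ℝ (hT s hs))
    rw [real_inner_comm (v₀ s) (deriv v₀ s)] at this; linarith
  have oTN' : ∀ s ∈ I, ⟪v₀ s, deriv (deriv v₀) s⟫ = -1 := fun s hs => by
    have := cst _ _ _ s oTN hs ((hT s hs).inner ℝ (hN s hs))
    rw [uN s hs] at this; linarith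
  have oNN' : ∀ s ∈ I, ⟪deriv v₀ s, deriv (deriv v₀) s⟫ = 0 := fun s hs => by
    have := cst _ _ _ s uN hs ((hN s hs).inner ℝ (hN s hs))
    rw [real_inner_comm (deriv v₀ s) (deriv (deriv v₀) s)] at this; linarith
  have eN' : ∀ s ∈ I, deriv (deriv v₀) s = - v₀ s + τ₀ v₀ s • cross (v₀ s) (deriv v₀ s) := by
    intro s hs
    have := frame_expand (uT s hs) (uN s hs) (oTN s hs) (deriv (deriv v₀) s)
    rw [oTN' s hs, oNN' s hs, real_inner_comm] at this
    rw [this]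
    simp only [neg_smul, one_smul, zero_smul, add_zero]
    rfl
  have hB : ∀ s ∈ I, HasDerivAt (fun x => cross (v₀ x) (deriv v₀ x))
      (- (τ₀ v₀ s • deriv v₀ s)) s := by
    intro s hs
    refine (cross_deriv (hT s hs) (hN s hs)).congr_deriv ?_
    rw [eN' s hs]
    have h1 := uT s hs
    have h2 := oTN s hs
    simp only [inn] at h1 h2
    generalize τ₀ v₀ s = t at *
    generalize v₀ s = T at *
    generalize deriv v₀ s = N at *
    apply e3ext <;> simp only [cr0, cr1, cr2, PiLp.add_apply, PiLp.neg_apply, PiLp.smul_apply,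
      smul_eq_mul]
    · linear_combination (-t * N 0) * h1 + t * T 0 * h2
    · linear_combination (-t * N 1) * h1 + t * T 1 * h2
    · linear_combination (-t * N 2) * h1 + t * T 2 * h2
  refine ⟨deriv v₀, fun x => cross (v₀ x) (deriv v₀ x), fun x =>
    ⟪v₁ x, deriv v₀ x⟫ • cross (v₀ x) (deriv v₀ x)
      - ⟪v₁ x, cross (v₀ x) (deriv v₀ x)⟫ • deriv v₀ x
      + ⟪deriv v₁ x, cross (v₀ x) (deriv v₀ x)⟫ • v₀ x, fun s hs =>
    ⟨uT s hs, uN s hs, oTN s hs, rfl, hT s hs, (hN s hs).congr_deriv (eN' s hs), hB s hs, ?_, ?_⟩⟩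
  · have hκd : HasDerivAt (κ₁ v₀ v₁) (⟪deriv v₀ s, deriv (deriv v₁) s⟫ +
        ⟪deriv (deriv v₀) s, deriv v₁ s⟫) s := (hN s hs).inner ℝ (hV' s hs)
    have hn1 : HasDerivAt (n₁ v₀ v₁) _ s := (hV' s hs).sub (hκd.smul (hN s hs))
    have eτ : τ₁ v₀ v₁ s = ⟪v₁ s, cross (v₀ s) (deriv v₀ s)⟫ +
        ⟪deriv (deriv v₁) s, cross (v₀ s) (deriv v₀ s)⟫ - κ₁ v₀ v₁ s * τ₀ v₀ s := by
      have h0 : τ₁ v₀ v₁ s = ⟪deriv (deriv v₀) s, t₁ v₀ v₁ s⟫ +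
        ⟪deriv (n₁ v₀ v₁) s, cross (v₀ s) (deriv v₀ s)⟫ := rfl
      have ht : t₁ v₀ v₁ s = cross (v₀ s) (deriv v₁ s - κ₁ v₀ v₁ s • deriv v₀ s) +
        cross (v₁ s) (deriv v₀ s) := rfl
      have hk : κ₁ v₀ v₁ s = ⟪deriv v₀ s, deriv v₁ s⟫ := rfl
      rw [h0, hn1.deriv, ht, eN' s hs]
      generalize ⟪deriv v₀ s, deriv (deriv v₁) s⟫ +
        ⟪- v₀ s + τ₀ v₀ s • cross (v₀ s) (deriv v₀ s), deriv v₁ s⟫ = q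
      have h1 := uT s hs
      have h2 := oTN s hs
      have h3 := uN s hs
      have h4 := horth s hs
      generalize τ₀ v₀ s = t at *
      generalize κ₁ v₀ v₁ s = k at *
      generalize v₀ s = T at *
      generalize deriv v₀ s = N at *
      generalize v₁ s = V at *
      generalize deriv v₁ s = V' at *
      generalize deriv (deriv v₁) s = V'' at *
      have g1 : ⟪cross T N, cross T N⟫ = 1 := by rw [cross_inner_self, h1, h2, h3]; ring
      have g2 : ⟪T, cross T N⟫ = 0 := by simp only [inn, cr0, cr1, cr2]; ring
      have g3 : ⟪N, cross T N⟫ = 0 := by simp only [inn, cr0, cr1, cr2]; ring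
      have g4 : ⟪T, cross T (V' - k • N)⟫ = 0 := by simp only [inn, cr0, cr1, cr2]; ring
      have g5 : ⟪T, cross V N⟫ = - ⟪V, cross T N⟫ := by simp only [inn, cr0, cr1, cr2]; ring
      have g6 : ⟪cross T N, cross T (V' - k • N)⟫ = 0 := by
        have : ⟪cross T N, cross T (V' - k • N)⟫ =
          ⟪T, T⟫ * (⟪N, V'⟫ - k * ⟪N, N⟫) - ⟪T, N⟫ * (⟪T, V'⟫ - k * ⟪T, N⟫) := by
          simp only [inn, cr0, cr1, cr2, PiLp.sub_apply, PiLp.smul_apply, smul_eq_mul]; ring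
        rw [this, h1, h2, h3, ← hk]; ring
      have g7 : ⟪cross T N, cross V N⟫ = 0 := by
        have : ⟪cross T N, cross V N⟫ = ⟪T, V⟫ * ⟪N, N⟫ - ⟪T, N⟫ * ⟪N, V⟫ := by
          simp only [inn, cr0, cr1, cr2]; ring
        rw [this, h4, h2]; ring
      simp only [inner_add_left, inner_add_right, inner_sub_left, inner_neg_left,
        real_inner_smul_left, g1, g2, g3, g4, g5, g6, g7]
      ring
    have ha := (hV s hs).inner ℝ (hN s hs)
    have hb := (hV s hs).inner ℝ (hB s hs)
    have hl := (hV' s hs).inner ℝ (hB s hs)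
    refine (((ha.smul (hB s hs)).sub (hb.smul (hN s hs))).add (hl.smul (hT s hs))).congr_deriv ?_
    rw [eτ, eN' s hs]
    have h4 := horth s hs
    have hk : ⟪deriv v₁ s, deriv v₀ s⟫ = κ₁ v₀ v₁ s := real_inner_comm _ _
    rw [real_inner_comm] at h4
    simp only [inner_add_right, inner_neg_right, real_inner_smul_right, h4, hk]
    module
  · have h := frame_expand (uT s hs) (uN s hs) (oTN s hs) (v₁ s)
    have h1 := uT s hs
    have h2 := oTN s hs
    have h4 := horth s hs
    rw [h4] at h
    rw [real_inner_comm (v₁ s) (deriv v₀ s), real_inner_comm (v₁ s) (cross (v₀ s) (deriv v₀ s))] at h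
    dsimp only
    generalize ⟪deriv v₁ s, cross (v₀ s) (deriv v₀ s)⟫ = l
    generalize ⟪v₁ s, cross (v₀ s) (deriv v₀ s)⟫ = b at *
    generalize ⟪v₁ s, deriv v₀ s⟫ = a at *
    rw [h]
    clear h h4
    simp only [inn] at h1 h2
    generalize v₀ s = T at *
    generalize deriv v₀ s = N at *
    apply e3ext <;> simp only [cr0, cr1, cr2, PiLp.add_apply, PiLp.sub_apply, PiLp.smul_apply,
      smul_eq_mul]
    · linear_combination (-a * N 0) * h1 + a * T 0 * h2
    · linear_combination (-a * N 1) * h1 + a * T 1 * h2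
    · linear_combination (-a * N 2) * h1 + a * T 2 * h2

/-- Completeness of the dual invariants: two arc-length parametrized non-cylindrical
ruled surfaces with the same invariants `κ₁, τ₀, τ₁` differ by a Euclidean motion
`x ↦ A x + b` with `A ∈ SO(3)`; in particular this motion carries every ruling of the
first surface onto the corresponding ruling of the second. -/
theorem dual_invariants_complete
    (I : Set ℝ) (v₀ v₁ w₀ w₁ : ℝ → E3)
    (hI : IsOpen I) (hI' : I.OrdConnected)
    (hv₀ : ContDiffOn ℝ (⊤ : ℕ∞) v₀ I) (hv₁ : ContDiffOn ℝ (⊤ : ℕ∞) v₁ I)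
    (hunit : ∀ s ∈ I, ‖v₀ s‖ = 1) (horth : ∀ s ∈ I, ⟪v₀ s, v₁ s⟫ = 0)
    (harc : ∀ s ∈ I, ‖deriv v₀ s‖ = 1)
    (hw₀ : ContDiffOn ℝ (⊤ : ℕ∞) w₀ I) (hw₁ : ContDiffOn ℝ (⊤ : ℕ∞) w₁ I)
    (hunitw : ∀ s ∈ I, ‖w₀ s‖ = 1) (horthw : ∀ s ∈ I, ⟪w₀ s, w₁ s⟫ = 0)
    (harcw : ∀ s ∈ I, ‖deriv w₀ s‖ = 1)
    (hκ : ∀ s ∈ I, κ₁ w₀ w₁ s = κ₁ v₀ v₁ s)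
    (hτ₀ : ∀ s ∈ I, τ₀ w₀ s = τ₀ v₀ s)
    (hτ₁ : ∀ s ∈ I, τ₁ w₀ w₁ s = τ₁ v₀ v₁ s) :
    ∃ (A : E3 ≃ₗᵢ[ℝ] E3) (b : E3),
      LinearMap.det (A.toLinearEquiv : E3 →ₗ[ℝ] E3) = 1 ∧
      ∀ s ∈ I,
        w₀ s = A (v₀ s) ∧
        w₁ s = A (v₁ s) + cross b (A (v₀ s)) ∧
        (fun x => A x + b) '' {p | ∃ t : ℝ, p = cross (v₀ s) (v₁ s) + t • v₀ s} =
          {p | ∃ t : ℝ, p = cross (w₀ s) (w₁ s) + t • w₀ s} := by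
  rcases I.eq_empty_or_nonempty with rfl | ⟨a, ha⟩
  · exact ⟨LinearIsometryEquiv.refl ℝ E3, 0, by
      have : ((LinearIsometryEquiv.refl ℝ E3).toLinearEquiv : E3 →ₗ[ℝ] E3) = LinearMap.id := rfl
      rw [this, LinearMap.det_id], by simp⟩
  obtain ⟨N, B, p, H⟩ := structure_eqs hI hv₀ hv₁ hunit horth harc
  obtain ⟨N', B', p', H'⟩ := structure_eqs hI hw₀ hw₁ hunitw horthw harcw
  obtain ⟨uT, uN, oTN, eB, -⟩ := H a ha
  obtain ⟨uT', uN', oTN', eB', -⟩ := H' a ha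
  let A : E3 ≃ₗᵢ[ℝ] E3 := (frameB uT uN oTN).equiv (frameB uT' uN' oTN') (Equiv.refl _)
  have hAi : ∀ i, A (![v₀ a, N a, cross (v₀ a) (N a)] i) =
      ![w₀ a, N' a, cross (w₀ a) (N' a)] i := by
    intro i
    rw [← frameB_coe uT uN oTN, ← frameB_coe uT' uN' oTN']
    simp [A]
  have hA0 : A (v₀ a) = w₀ a := hAi 0
  have hA1 : A (N a) = N' a := hAi 1
  have hA2 : A (cross (v₀ a) (N a)) = cross (w₀ a) (N' a) := hAi 2
  have hdet : LinearMap.det (A.toLinearEquiv : E3 →ₗ[ℝ] E3) = 1 := by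
    have h := map_det (A.toLinearEquiv : E3 →ₗ[ℝ] E3) (v₀ a) (N a) (cross (v₀ a) (N a))
    have h' : ⟪cross (A (v₀ a)) (A (N a)), A (cross (v₀ a) (N a))⟫ =
      LinearMap.det (A.toLinearEquiv : E3 →ₗ[ℝ] E3) *
        ⟪cross (v₀ a) (N a), cross (v₀ a) (N a)⟫ := h
    rw [hA0, hA1, hA2, cross_inner_self, cross_inner_self, uT, uN, oTN, uT', uN', oTN'] at h'
    linarith
  -- the frame transport is constant
  have hM : ∀ s ∈ I, ∀ x, ⟪v₀ s, x⟫ • w₀ s + ⟪N s, x⟫ • N' s + ⟪B s, x⟫ • B' s = A x := by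
    intro s hs x
    have hc := const_on hI hI'
      (f := fun s => ⟪v₀ s, x⟫ • w₀ s + ⟪N s, x⟫ • N' s + ⟪B s, x⟫ • B' s) ?_ hs ha
    · refine hc.trans ?_
      conv_rhs => rw [frame_expand uT uN oTN x]
      rw [map_add, map_add, map_smul, map_smul, map_smul, hA0, hA1, hA2, eB, eB']
    · intro s hs
      obtain ⟨-, -, -, -, dT, dN, dB, -⟩ := H s hs
      obtain ⟨-, -, -, -, dT', dN', dB', -⟩ := H' s hs
      have q := hasDerivAt_const s x
      refine (((((dT.inner ℝ q).smul dT').add ((dN.inner ℝ q).smul dN')).add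
        ((dB.inner ℝ q).smul dB'))).congr_deriv ?_
      rw [hτ₀ s hs]
      simp only [inner_zero_right, inner_add_left, inner_neg_left, real_inner_smul_left]
      module
  have fr : ∀ s ∈ I, A (v₀ s) = w₀ s ∧ A (B s) = B' s := by
    intro s hs
    obtain ⟨uT, uN, oTN, eB, -⟩ := H s hs
    have g1 : ⟪cross (v₀ s) (N s), cross (v₀ s) (N s)⟫ = 1 := by
      rw [cross_inner_self, uT, uN, oTN]; ring
    have g2 : ⟪v₀ s, cross (v₀ s) (N s)⟫ = 0 := by simp only [inn, cr0, cr1, cr2]; ring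
    have g3 : ⟪N s, cross (v₀ s) (N s)⟫ = 0 := by simp only [inn, cr0, cr1, cr2]; ring
    constructor
    · rw [← hM s hs, eB, real_inner_comm (v₀ s) (N s), real_inner_comm (v₀ s) (cross _ _),
        uT, oTN, g2]; simp
    · rw [← hM s hs, eB, g1, g2, g3]; simp
  let b : E3 := p' a - A (p a)
  have hb : ∀ s ∈ I, p' s = A (p s) + b := by
    intro s hs
    have hc := const_on hI hI' (f := fun s => p' s - A (p s)) ?_ hs ha
    · have : p' s - A (p s) = b := hc
      rw [← this]; abel
    · intro s hs
      obtain ⟨-, -, -, -, -, -, -, dp, -⟩ := H s hs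
      obtain ⟨-, -, -, -, -, -, -, dp', -⟩ := H' s hs
      have dA : HasDerivAt (fun s => A (p s)) (A (τ₁ v₀ v₁ s • v₀ s + κ₁ v₀ v₁ s • B s)) s :=
        (A.toContinuousLinearEquiv : E3 →L[ℝ] E3).hasFDerivAt.comp_hasDerivAt s dp
      refine (dp'.sub dA).congr_deriv ?_
      rw [map_add, map_smul, map_smul, (fr s hs).1, (fr s hs).2, hτ₁ s hs, hκ s hs, sub_self]
  refine ⟨A, b, hdet, fun s hs => ?_⟩
  have e0 := (fr s hs).1
  have e1 : w₁ s = A (v₁ s) + cross b (A (v₀ s)) := by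
    obtain ⟨-, -, -, -, -, -, -, -, hp⟩ := H s hs
    obtain ⟨-, -, -, -, -, -, -, -, hp'⟩ := H' s hs
    rw [hp', hb s hs, hp, map_cross A hdet, e0]
    apply e3ext <;> simp only [cr0, cr1, cr2, PiLp.add_apply] <;> ring
  refine ⟨e0.symm, e1, ?_⟩
  have e2 : cross (w₀ s) (w₁ s) = A (cross (v₀ s) (v₁ s)) + b - ⟪b, w₀ s⟫ • w₀ s := by
    rw [e1, map_cross A hdet, e0]
    have h1 := (H' s hs).1
    simp only [inn] at h1
    apply e3ext <;> simp only [inn, cr0, cr1, cr2, PiLp.add_apply, PiLp.sub_apply,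
      PiLp.smul_apply, smul_eq_mul]
    · linear_combination b 0 * h1
    · linear_combination b 1 * h1
    · linear_combination b 2 * h1
  ext q
  simp only [Set.mem_image, Set.mem_ofPred_eq]
  constructor
  · rintro ⟨_, ⟨t, rfl⟩, rfl⟩
    refine ⟨t + ⟪b, w₀ s⟫, ?_⟩
    rw [e2, map_add, map_smul, e0]
    module
  · rintro ⟨t, rfl⟩
    refine ⟨_, ⟨t - ⟪b, w₀ s⟫, rfl⟩, ?_⟩
    rw [e2, map_add, map_smul, e0]
    module
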